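/- arXiv:1811.06598 — 2 statements merged into one kernel-verified Lean document; each statement's English description precedes it below -/
import Mathlib

section
/- cos(π/7) + cos(3π/7) − cos(π/21) + cos(8π/21) = 1/2. -/
open Real

/-!
The cosines `cos (π / 7)`, `cos (3 * π / 7)`, `cos (5 * π / 7)` sum to `1 / 2`: multiplied by
`2 * sin (π / 7)` their sum telescopes to `sin (6 * π / 7) = sin (π / 7)`. As `2 * cos (π / 3) = 1`,
the last of them equals `cos (5 * π / 7 + π / 3) + cos (5 * π / 7 - π / 3)`, which is
`-cos (π / 21) + cos (8 * π / 21)`.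
-/

theorem two_mul_sin_mul_sum_cos_odd_mul (n : ℕ) (t : ℝ) :
    2 * sin t * ∑ i ∈ Finset.range n, cos ((2 * i + 1) * t) = sin (2 * n * t) := by
  have hangle (i : ℕ) : (2 * i + 1) * t = 2 * t * i + t := by ring
  calc 2 * sin t * ∑ i ∈ Finset.range n, cos ((2 * i + 1) * t)
      = 2 * (sin (2 * t / 2) * ∑ i ∈ Finset.range n, cos (2 * t * i + t)) := by
        simp only [hangle, mul_div_cancel_left₀ t two_ne_zero, mul_assoc]
    _ = 2 * (sin (n * (2 * t) / 2) * cos ((n - 1) * (2 * t) / 2 + t)) := by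
        rw [sin_mul_sum_cos]
    _ = 2 * sin (n * t) * cos (n * t) := by ring_nf
    _ = sin (2 * n * t) := by rw [← sin_two_mul, mul_assoc]

theorem sum_cos_odd_mul_pi_div_two_mul_add_one {n : ℕ} (hn : n ≠ 0) :
    ∑ i ∈ Finset.range n, cos ((2 * i + 1) * (π / (2 * n + 1))) = 1 / 2 := by
  set t : ℝ := π / (2 * n + 1) with ht
  have hsin : sin t ≠ 0 := by
    have hlt : t < π := div_lt_self pi_pos (by linarith [Nat.cast_pos (α := ℝ).2 hn.pos])
    exact (sin_pos_of_pos_of_lt_pi (by positivity) hlt).ne'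
  have hreflect : sin (2 * n * t) = sin t := by
    rw [← sin_pi_sub, show π - 2 * n * t = t by rw [ht]; field_simp; ring]
  apply mul_left_cancel₀ (mul_ne_zero two_ne_zero hsin)
  rw [two_mul_sin_mul_sum_cos_odd_mul, hreflect]
  ring

theorem cos_add_pi_div_three_add_cos_sub_pi_div_three (x : ℝ) :
    cos (x + π / 3) + cos (x - π / 3) = cos x := by
  rw [add_comm, ← two_mul_cos_mul_cos, cos_pi_div_three]
  ring

theorem conway_jones_item7 :
    Real.cos (π / 7) + Real.cos (3 * π / 7) - Real.cos (π / 21) + Real.cos (8 * π / 21)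
      = 1 / 2 := by
  have hsum : cos (π / 7) + cos (3 * π / 7) + cos (5 * π / 7) = 1 / 2 := by
    convert sum_cos_odd_mul_pi_div_two_mul_add_one three_ne_zero using 1
    norm_num [Finset.sum_range_succ, mul_div_assoc']
  have hsplit : -cos (π / 21) + cos (8 * π / 21) = cos (5 * π / 7) := by
    rw [← cos_add_pi_div_three_add_cos_sub_pi_div_three (5 * π / 7), ← cos_add_pi]
    ring_nf
  linear_combination hsum + hsplit
end

section
/- The 4×4 real symmetric matrix G with rows (1, −cos r, −cos p, −cos q), (−cos r, 1, −cos q, −cos p), (−cos p, −cos q, 1, −cos s), (−cos q, −cos p, −cos s, 1), where p = 2π/3, q = π/3, r = 3π/5, s = π/5, is positive definite. -/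
open Real

/-!
The matrix is invariant under the double transposition `(1 2)(3 4)`, so it is congruent to the
direct sum of two `2 × 2` matrices, its restrictions to the symmetric and the antisymmetric vectors.
Positive definiteness thus reduces to two determinant inequalities in the cosines; at the given
angles these read `0 < 1 / 4` and `1 < 5 / 4`.
-/

section PosDef

open Matrix

theorem isUnit_two_matrix {n R : Type*} [Fintype n] [DecidableEq n] [Ring R] [Invertible (2 : R)] :
    IsUnit (2 : Matrix n n R) := by
  simpa only [map_ofNat] using (isUnit_of_invertible (2 : R)).map (scalar n)

variable {m n R : Type*} [Ring R] [PartialOrder R] [StarRing R]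

theorem posDef_submatrix_equiv {M : Matrix n n R} (e : m ≃ n) :
    (M.submatrix e e).PosDef ↔ M.PosDef :=
  ⟨fun h ↦ by simpa using h.submatrix e.symm.injective, fun h ↦ h.submatrix e.injective⟩

variable [AddLeftMono R] [Finite n]

theorem posDef_add_self_iff [Invertible (2 : R)] {A : Matrix n n R} :
    (A + A).PosDef ↔ A.PosDef := by
  have := Fintype.ofFinite n
  classical
  -- `4A` is congruent to `A` via `2`, which avoids halving an inequality in `R`.
  have congruence : star 2 * A * 2 = A + A + (A + A) := by
    rw [star_ofNat, two_mul, mul_two]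
  refine ⟨fun h ↦ ?_, fun h ↦ h.add h⟩
  rw [← isUnit_two_matrix.posDef_star_left_conjugate_iff, congruence]
  exact h.add h

theorem posDef_fromBlocks_zero_iff [Finite m] {A : Matrix m m R} {D : Matrix n n R} :
    (fromBlocks A 0 0 D).PosDef ↔ A.PosDef ∧ D.PosDef := by
  have := Fintype.ofFinite m
  have := Fintype.ofFinite n
  refine ⟨fun h ↦ ⟨h.submatrix Sum.inl_injective, h.submatrix Sum.inr_injective⟩,
    fun ⟨hA, hD⟩ ↦ .of_dotProduct_mulVec_pos (hA.1.fromBlocks (by simp) hD.1) fun x hx ↦ ?_⟩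
  have split : star x ⬝ᵥ (fromBlocks A 0 0 D *ᵥ x) =
      star (x ∘ Sum.inl) ⬝ᵥ (A *ᵥ (x ∘ Sum.inl)) + star (x ∘ Sum.inr) ⬝ᵥ (D *ᵥ (x ∘ Sum.inr)) := by
    simp [fromBlocks_mulVec, dotProduct]
  rw [split]
  by_cases hl : x ∘ Sum.inl = 0
  · have hr : x ∘ Sum.inr ≠ 0 := fun hr ↦ hx <| by
      rw [← Sum.elim_comp_inl_inr x, hl, hr, Sum.elim_zero_zero]
    exact add_pos_of_nonneg_of_pos (hA.posSemidef.dotProduct_mulVec_nonneg _)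
      (hD.dotProduct_mulVec_pos hr)
  · exact add_pos_of_pos_of_nonneg (hA.dotProduct_mulVec_pos hl)
      (hD.posSemidef.dotProduct_mulVec_nonneg _)

theorem posDef_fromBlocks_self_iff [Invertible (2 : R)] {A B : Matrix n n R} :
    (fromBlocks A B B A).PosDef ↔ (A + B).PosDef ∧ (A - B).PosDef := by
  have := Fintype.ofFinite n
  classical
  let U : Matrix (n ⊕ n) (n ⊕ n) R := fromBlocks 1 1 1 (-1)
  have hU : IsUnit U := by
    have sq_eq_two : U ^ 2 = 2 := by
      calc
        U ^ 2 = fromBlocks (1 + 1) (0 + 0) (0 + 0) (1 + 1) := by simp [U, sq, fromBlocks_multiply]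
        _ = 2 := by rw [← fromBlocks_add, fromBlocks_one, one_add_one_eq_two]
    rw [← isUnit_pow_iff two_ne_zero, sq_eq_two]
    exact isUnit_two_matrix
  have congruence : star U * fromBlocks A B B A * U =
      fromBlocks ((A + B) + (A + B)) 0 0 ((A - B) + (A - B)) := by
    simp only [U, star_eq_conjTranspose, fromBlocks_conjTranspose, fromBlocks_multiply]
    congr 1 <;> simp <;> abel
  rw [← hU.posDef_star_left_conjugate_iff, congruence, posDef_fromBlocks_zero_iff,
    posDef_add_self_iff, posDef_add_self_iff]

end PosDef

section FinTwo

open Matrix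

variable {R : Type*} [CommRing R] [StarRing R] [TrivialStar R]

theorem star_dotProduct_mulVec_fin_two (a b d : R) (x : Fin 2 → R) :
    star x ⬝ᵥ (!![a, b; b, d] *ᵥ x) = a * x 0 ^ 2 + 2 * b * x 0 * x 1 + d * x 1 ^ 2 := by
  simp only [mulVec, dotProduct, Fin.sum_univ_two, star_trivial, of_apply, cons_val_zero,
    cons_val_one]
  ring

theorem posDef_fin_two_iff [LinearOrder R] [IsStrictOrderedRing R] {a b d : R} :
    !![a, b; b, d].PosDef ↔ 0 < a ∧ b ^ 2 < a * d := by
  refine ⟨fun h ↦ ?_, fun ⟨ha, hdet⟩ ↦ .of_dotProduct_mulVec_pos ?_ fun x hx ↦ ?_⟩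
  · have ha : 0 < a := by simpa using h.diag_pos (i := 0)
    -- The matrix maps `(-b, a)` to `(0, a * d - b ^ 2)`.
    have hx : ![-b, a] ≠ 0 := fun h0 ↦ ha.ne' (congrFun h0 1)
    have form_pos : 0 < a * (-b) ^ 2 + 2 * b * -b * a + d * a ^ 2 :=
      star_dotProduct_mulVec_fin_two a b d ![-b, a] ▸ h.dotProduct_mulVec_pos hx
    have a_mul_det_pos : 0 < a * (a * d - b ^ 2) := by linear_combination form_pos
    exact ⟨ha, sub_pos.1 (pos_of_mul_pos_right a_mul_det_pos ha.le)⟩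
  · ext i j
    fin_cases i <;> fin_cases j <;> simp
  · rw [star_dotProduct_mulVec_fin_two]
    have complete_square : a * (a * x 0 ^ 2 + 2 * b * x 0 * x 1 + d * x 1 ^ 2) =
        (a * x 0 + b * x 1) ^ 2 + (a * d - b ^ 2) * x 1 ^ 2 := by ring
    refine pos_of_mul_pos_right (complete_square ▸ ?_) ha.le
    by_cases h1 : x 1 = 0
    · have h0 : x 0 ≠ 0 := fun h0 ↦ hx (by ext i; fin_cases i <;> assumption)
      simpa [h1] using sq_pos_of_ne_zero (mul_ne_zero ha.ne' h0)
    · have := mul_pos (sub_pos.2 hdet) (sq_pos_of_ne_zero h1)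
      positivity

end FinTwo

/-- The Gram matrix `G(p, q, r, s)` of a `ℤ₂`-symmetric spherical tetrahedron: the `(i, j)` entry is
`-cos` of the dihedral angle between faces `i` and `j`. The angles `p` and `q` each occur at a pair
of opposite edges, and `r`, `s` at the two remaining edges, which the symmetry preserves. -/
noncomputable def gramMatrix (p q r s : ℝ) : Matrix (Fin 4) (Fin 4) ℝ :=
  !![1, -cos r, -cos p, -cos q;
     -cos r, 1, -cos q, -cos p;
     -cos p, -cos q, 1, -cos s;
     -cos q, -cos p, -cos s, 1]

theorem gramMatrix_submatrix_eq_fromBlocks (p q r s : ℝ) :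
    let e := finSumFinEquiv.trans (Equiv.swap (1 : Fin (2 + 2)) 2)
    let A := !![1, -cos p; -cos p, 1]
    let B := !![-cos r, -cos q; -cos q, -cos s]
    (gramMatrix p q r s).submatrix e e = Matrix.fromBlocks A B B A := by
  intro e A B
  ext (i | i) (j | j) <;> fin_cases i <;> fin_cases j <;> rfl

theorem posDef_gramMatrix_iff {p q r s : ℝ} :
    (gramMatrix p q r s).PosDef ↔
      (cos p + cos q) ^ 2 < (1 - cos r) * (1 - cos s) ∧
        (cos p - cos q) ^ 2 < (1 + cos r) * (1 + cos s) := by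
  rw [← posDef_submatrix_equiv, gramMatrix_submatrix_eq_fromBlocks, posDef_fromBlocks_self_iff]
  have symm_block : !![1, -cos p; -cos p, 1] + !![-cos r, -cos q; -cos q, -cos s] =
      !![1 - cos r, -(cos p + cos q); -(cos p + cos q), 1 - cos s] := by
    simp [sub_eq_add_neg, add_comm]
  have antisymm_block : !![1, -cos p; -cos p, 1] - !![-cos r, -cos q; -cos q, -cos s] =
      !![1 + cos r, -(cos p - cos q); -(cos p - cos q), 1 + cos s] := by
    simp [sub_eq_add_neg, add_comm]
  rw [symm_block, antisymm_block, posDef_fin_two_iff, posDef_fin_two_iff, neg_sq, neg_sq]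
  have pos_of_sq_lt_mul {x y z : ℝ} (hx : 0 ≤ x) (h : z ^ 2 < x * y) : 0 < x :=
    hx.lt_of_ne' (left_ne_zero_of_mul ((sq_nonneg z).trans_lt h).ne')
  exact and_congr
    (and_iff_right_of_imp (pos_of_sq_lt_mul (by linarith [cos_le_one r])))
    (and_iff_right_of_imp (pos_of_sq_lt_mul (by linarith [neg_one_le_cos r])))

theorem cos_two_mul_pi_div_three : cos (2 * π / 3) = -(1 / 2) := by
  rw [show 2 * π / 3 = π - π / 3 by ring, cos_pi_sub, cos_pi_div_three]

theorem cos_three_mul_pi_div_five : cos (3 * π / 5) = (1 - √5) / 4 := by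
  rw [show 3 * π / 5 = π - 2 * (π / 5) by ring, cos_pi_sub, cos_two_mul, cos_pi_div_five]
  linear_combination (-1 / 8) * Real.sq_sqrt (show (0 : ℝ) ≤ 5 by norm_num)

theorem gram_matrix_sporadic_1_posDef :
    let p : ℝ := 2 * π / 3
    let q : ℝ := π / 3
    let r : ℝ := 3 * π / 5
    let s : ℝ := π / 5
    Matrix.PosDef
      !![1, -Real.cos r, -Real.cos p, -Real.cos q;
         -Real.cos r, 1, -Real.cos q, -Real.cos p;
         -Real.cos p, -Real.cos q, 1, -Real.cos s;
         -Real.cos q, -Real.cos p, -Real.cos s, (1 : ℝ)] := by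
  intro p q r s
  have sqrt_five_sq : √5 ^ 2 = 5 := Real.sq_sqrt (by norm_num)
  have hp : cos p = -(1 / 2) := cos_two_mul_pi_div_three
  have hq : cos q = 1 / 2 := cos_pi_div_three
  have hr : cos r = (1 - √5) / 4 := cos_three_mul_pi_div_five
  have hs : cos s = (1 + √5) / 4 := cos_pi_div_five
  have symm_det : (1 - cos r) * (1 - cos s) = 1 / 4 := by
    rw [hr, hs]; linear_combination (-1 / 16) * sqrt_five_sq
  have antisymm_det : (1 + cos r) * (1 + cos s) = 5 / 4 := by
    rw [hr, hs]; linear_combination (-1 / 16) * sqrt_five_sq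
  refine posDef_gramMatrix_iff.2 ⟨?_, ?_⟩
  · rw [symm_det, hp, hq]; norm_num
  · rw [antisymm_det, hp, hq]; norm_num
end
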